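/- The function J defined on the slit plane Ω = ℂ \ { i y : y ≤ 0 } by J(r e^{iθ}) = e^{-iθ/6} ∫_{-∞}^{∞} exp(-e^{-iθ/3} t²) cos( √(2 t⁶ r / 27) ) dt, for r > 0 and θ ∈ (-π/2, 3π/2), is well defined and holomorphic on Ω, and for every real η > 0 it satisfies J(3/(2η³)) = 2π √η e^{2η³/3} Ai(η²). -/

import Mathlib

open Filter MeasureTheory Real

/-- The Airy function, defined for real `x` by
`Ai(x) = (2π)⁻¹ · lim_{R→∞} ∫_{-R}^{R} e^{i(t³/3 + x t)} dt`. -/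
noncomputable def Ai (x : ℝ) : ℂ :=
  ((2 * Real.pi : ℝ)⁻¹ : ℂ) * limUnder Filter.atTop
    (fun R : ℝ => ∫ t in (-R)..R, Complex.exp (Complex.I * ((t : ℂ)^3 / 3 + (x : ℂ) * t)))

/-- The slit plane `Ω = ℂ \ { i y : y ≤ 0 }`. -/
def Ω : Set ℂ := {z : ℂ | ¬ ∃ y : ℝ, y ≤ 0 ∧ z = (y : ℂ) * Complex.I}

/-!
Put `L = log r + iθ`, the logarithm of `z = r e^{iθ}` on `Ω`. Scaling `t` by `r ^ (-1/6)` turns the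
integral defining `J` into `e^{-L/6} ∫ exp (-e^{-L/3} t²) cos (√(2/27) t³) dt`. Now only the
Gaussian factor of the integrand depends on `z`, and `re e^{-L/3} > 0` as `-π/2 < θ < 3π/2`, so
differentiation under the integral sign shows that `J` is holomorphic.

For the Airy function, move the contour of integration from the real line to its translate through
the saddle point `iη` of the phase `t³ / 3 + η² t`. On the translate the integrand is
`e^{-2η³/3} e^{-η s²} e^{i s³/3}`, whose odd part integrates to zero; the remaining cosine integral
is, after scaling, the one for `J (3 / (2 η³))`.
-/

open scoped Topology

lemma differentiableAt_integral_cexp_neg_mul_sq_smul {E : Type*} [NormedAddCommGroup E]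
    [NormedSpace ℂ E] {g : ℝ → E} {C : ℝ} (hg : AEStronglyMeasurable g) (hgC : ∀ᵐ t, ‖g t‖ ≤ C)
    {w : ℂ} (hw : 0 < w.re) :
    DifferentiableAt ℂ (fun w : ℂ => ∫ t : ℝ, Complex.exp (-w * (t : ℂ) ^ 2) • g t) w := by
  have hmeas (w : ℂ) : AEStronglyMeasurable fun t : ℝ => Complex.exp (-w * (t : ℂ) ^ 2) • g t :=
    (by fun_prop : Continuous fun t : ℝ => Complex.exp (-w * (t : ℂ) ^ 2)).aestronglyMeasurable.smul
      hg
  have hmeas' : AEStronglyMeasurable fun t : ℝ =>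
      (Complex.exp (-w * (t : ℂ) ^ 2) * -(t : ℂ) ^ 2) • g t :=
    (by fun_prop : Continuous fun t : ℝ =>
      Complex.exp (-w * (t : ℂ) ^ 2) * -(t : ℂ) ^ 2).aestronglyMeasurable.smul hg
  have hre {v : ℂ} (hv : v ∈ Metric.ball w (w.re / 2)) : w.re / 2 ≤ v.re := by
    have := (abs_le.1 ((Complex.abs_re_le_norm (v - w)).trans (mem_ball_iff_norm.1 hv).le)).1
    rw [Complex.sub_re] at this
    linarith
  have hbound : ∀ᵐ t : ℝ, ∀ v ∈ Metric.ball w (w.re / 2),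
      ‖(Complex.exp (-v * (t : ℂ) ^ 2) * -(t : ℂ) ^ 2) • g t‖ ≤
        t ^ 2 * rexp (-(w.re / 2) * t ^ 2) * C := by
    filter_upwards [hgC] with t ht v hv
    rw [norm_smul, norm_mul, norm_cexp_neg_mul_sq, norm_neg, norm_pow,
      Complex.norm_real, norm_eq_abs, sq_abs, mul_comm (rexp _)]
    have := hre hv
    gcongr
  have hbound_int : Integrable fun t : ℝ => t ^ 2 * rexp (-(w.re / 2) * t ^ 2) * C := by
    simpa using (integrable_rpow_mul_exp_neg_mul_sq (half_pos hw)
      (by norm_num : (-1 : ℝ) < 2)).mul_const C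
  have hderiv (t : ℝ) (v : ℂ) : HasDerivAt (fun v : ℂ => Complex.exp (-v * (t : ℂ) ^ 2) • g t)
      ((Complex.exp (-v * (t : ℂ) ^ 2) * -(t : ℂ) ^ 2) • g t) v := by
    simpa using (((hasDerivAt_id v).neg.mul_const ((t : ℂ) ^ 2)).cexp).smul_const (g t)
  exact (hasDerivAt_integral_of_dominated_loc_of_deriv_le
    (Metric.ball_mem_nhds w (half_pos hw)) (.of_forall hmeas)
    ((integrable_cexp_neg_mul_sq hw).smul_bdd C hg hgC) hmeas' hbound hbound_int
    (.of_forall fun t v _ => hderiv t v)).2.differentiableAt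

lemma integral_mul_cexp_eq_integral_mul_cos {G : Type*} [MeasurableSpace G] [AddGroup G]
    [MeasurableNeg G] {μ : Measure G} [μ.IsNegInvariant] {f : G → ℂ} {φ : G → ℝ}
    (hf : f.Even) (hφ : φ.Odd)
    (hint : Integrable (fun t => f t * Complex.exp (φ t * Complex.I)) μ) :
    ∫ t, f t * Complex.exp (φ t * Complex.I) ∂μ = ∫ t, f t * (Real.cos (φ t) : ℂ) ∂μ := by
  set F : G → ℂ := fun t => f t * Complex.exp (φ t * Complex.I)
  have hcos (t : G) : f t * (Real.cos (φ t) : ℂ) = (F t + F (-t)) / 2 := by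
    simp only [F, hf t, hφ t, Complex.ofReal_cos, Complex.cos, Complex.ofReal_neg]
    ring
  simp only [hcos]
  rw [integral_div, integral_add hint hint.comp_neg, integral_neg_eq_self F μ, add_self_div_two]

lemma tendsto_intervalIntegral_of_tendsto_vertical {E : Type*} [NormedAddCommGroup E]
    [NormedSpace ℂ E] {f : ℂ → E} {y : ℝ}
    (hf : DifferentiableOn ℂ f (Complex.im ⁻¹' Set.uIcc 0 y))
    (hvert : Tendsto (fun R : ℝ => ∫ v in (0 : ℝ)..y, f (R + v * Complex.I)) (cocompact ℝ) (𝓝 0))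
    (hint : Integrable fun s : ℝ => f (s + y * Complex.I)) :
    Tendsto (fun R : ℝ => ∫ t in (-R)..R, f t) atTop (𝓝 (∫ s : ℝ, f (s + y * Complex.I))) := by
  have hrect (R : ℝ) : ∫ t in (-R)..R, f t =
      (∫ s in (-R)..R, f (s + y * Complex.I)) -
        Complex.I • (∫ v in (0 : ℝ)..y, f (R + v * Complex.I)) +
        Complex.I • (∫ v in (0 : ℝ)..y, f ((-R : ℝ) + v * Complex.I)) := by
    have := Complex.integral_boundary_rect_eq_zero_of_differentiableOn f ((-R : ℝ) : ℂ)
      (R + y * Complex.I) (hf.mono fun z hz => by simpa using hz.2)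
    simp only [Complex.ofReal_re, Complex.ofReal_im, Complex.add_re, Complex.add_im,
      Complex.re_ofReal_mul, Complex.im_ofReal_mul, Complex.I_re, Complex.I_im, mul_zero, mul_one,
      add_zero, zero_add, Complex.ofReal_zero, zero_mul] at this
    rw [← sub_eq_zero, ← this]
    abel
  rw [cocompact_eq_atBot_atTop, tendsto_sup] at hvert
  simp only [hrect]
  simpa using ((intervalIntegral_tendsto_integral hint tendsto_neg_atTop_atBot tendsto_id).sub
    (hvert.2.const_smul Complex.I)).add
      ((hvert.1.comp tendsto_neg_atTop_atBot).const_smul Complex.I)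

/-- The integral `∫ exp (-w t²) cos (c t³) dt`, absolutely convergent for `0 < re w`. Both `J` and
the Airy function are values of it. -/
noncomputable def cubicGaussian (c : ℝ) (w : ℂ) : ℂ :=
  ∫ t : ℝ, Complex.exp (-w * (t : ℂ) ^ 2) * (Real.cos (c * t ^ 3) : ℂ)

lemma differentiableAt_cubicGaussian (c : ℝ) {w : ℂ} (hw : 0 < w.re) :
    DifferentiableAt ℂ (cubicGaussian c) w := by
  refine differentiableAt_integral_cexp_neg_mul_sq_smul (C := 1)
    (by fun_prop : Continuous fun t : ℝ => (Real.cos (c * t ^ 3) : ℂ)).aestronglyMeasurable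
    (.of_forall fun t => ?_) hw
  rw [Complex.norm_real]
  exact abs_cos_le_one _

lemma cubicGaussian_scale {a : ℝ} (ha : 0 < a) (c : ℝ) (w : ℂ) :
    cubicGaussian (a ^ 3 * c) (a ^ 2 * w) = (a : ℂ)⁻¹ * cubicGaussian c w := by
  have h := Measure.integral_comp_mul_left
    (fun t : ℝ => Complex.exp (-w * (t : ℂ) ^ 2) * (Real.cos (c * t ^ 3) : ℂ)) a
  rw [abs_of_pos (inv_pos.2 ha), Complex.real_smul, Complex.ofReal_inv] at h
  rw [cubicGaussian, cubicGaussian, ← h]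
  congr with t
  congr 2
  · push_cast; ring
  · congr 1; ring

lemma integrable_cexp_neg_mul_sq_mul_cexp {w : ℂ} (hw : 0 < w.re) {φ : ℝ → ℝ} (hφ : Measurable φ) :
    Integrable fun t : ℝ => Complex.exp (-w * (t : ℂ) ^ 2) * Complex.exp (φ t * Complex.I) :=
  (integrable_cexp_neg_mul_sq hw).mul_bdd (c := 1) (by fun_prop)
    (.of_forall fun t => (Complex.norm_exp_ofReal_mul_I _).le)

lemma integral_cexp_neg_mul_sq_mul_cexp_cube (c : ℝ) {w : ℂ} (hw : 0 < w.re) :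
    ∫ t : ℝ, Complex.exp (-w * (t : ℂ) ^ 2) * Complex.exp ((c * t ^ 3 : ℝ) * Complex.I) =
      cubicGaussian c w :=
  integral_mul_cexp_eq_integral_mul_cos (fun t => by simp)
    (fun t => by simp [Odd.neg_pow (by decide : Odd 3)])
    (integrable_cexp_neg_mul_sq_mul_cexp hw (by fun_prop))

lemma cos_sqrt_mul_pow_six (c t : ℝ) : Real.cos √(c * t ^ 6) = Real.cos (√c * t ^ 3) := by
  rw [sqrt_mul' c (by positivity), show t ^ 6 = (t ^ 3) ^ 2 by ring, sqrt_sq_eq_abs,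
    ← abs_of_nonneg (sqrt_nonneg c), ← abs_mul, cos_abs, abs_of_nonneg (sqrt_nonneg c)]

/-- The integrand `exp (i (t³ / 3 + x t))` of the Airy integral, extended to complex `t` so that the
contour can be moved into the upper half-plane. -/
noncomputable def airyIntegrand (x : ℝ) (t : ℂ) : ℂ :=
  Complex.exp (Complex.I * (t ^ 3 / 3 + x * t))

lemma airyIntegrand_add_mul_I (x s y : ℝ) :
    airyIntegrand x (s + y * Complex.I) = (rexp (y ^ 3 / 3 - x * y) : ℂ) *
      (Complex.exp (-y * (s : ℂ) ^ 2) *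
        Complex.exp ((s ^ 3 / 3 + (x - y ^ 2) * s : ℝ) * Complex.I)) := by
  rw [airyIntegrand, Complex.ofReal_exp, ← Complex.exp_add, ← Complex.exp_add]
  congr 1
  push_cast
  linear_combination (s ^ 2 * y + s * y ^ 2 * Complex.I + y ^ 3 * (Complex.I ^ 2 - 1) / 3 + x * y) *
    Complex.I_sq

lemma norm_airyIntegrand_add_mul_I (x s y : ℝ) :
    ‖airyIntegrand x (s + y * Complex.I)‖ = rexp (y ^ 3 / 3 - x * y) * rexp (-y * s ^ 2) := by
  rw [airyIntegrand_add_mul_I, norm_mul, norm_mul, norm_cexp_neg_mul_sq,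
    Complex.norm_exp_ofReal_mul_I, Complex.norm_real, norm_of_nonneg (exp_pos _).le, mul_one,
    Complex.ofReal_re]

lemma integrable_airyIntegrand_add_mul_I (x : ℝ) {y : ℝ} (hy : 0 < y) :
    Integrable fun s : ℝ => airyIntegrand x (s + y * Complex.I) := by
  simp only [airyIntegrand_add_mul_I]
  exact (integrable_cexp_neg_mul_sq_mul_cexp (by simpa using hy) (by fun_prop)).const_mul _

lemma tendsto_integral_airyIntegrand_vertical (x : ℝ) {y : ℝ} (hy : 0 ≤ y) :
    Tendsto (fun R : ℝ => ∫ v in (0 : ℝ)..y, airyIntegrand x (R + v * Complex.I))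
      (cocompact ℝ) (𝓝 0) := by
  have hbound (R : ℝ) {v : ℝ} (hv : 0 < v) : ‖airyIntegrand x (R + v * Complex.I)‖ ≤
      rexp (v ^ 3 / 3 - x * v) := by
    rw [norm_airyIntegrand_add_mul_I]
    exact mul_le_of_le_one_right (exp_pos _).le (exp_le_one_iff.2
      (mul_nonpos_of_nonpos_of_nonneg (neg_nonpos.2 hv.le) (sq_nonneg R)))
  have hsq : Tendsto (fun R : ℝ => R ^ 2) (cocompact ℝ) atTop := by
    simpa [Function.comp_def] using
      (tendsto_pow_atTop (two_ne_zero (α := ℕ))).comp (tendsto_norm_cocompact_atTop (E := ℝ))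
  have hlim {v : ℝ} (hv : 0 < v) :
      Tendsto (fun R : ℝ => airyIntegrand x (R + v * Complex.I)) (cocompact ℝ) (𝓝 0) := by
    rw [tendsto_zero_iff_norm_tendsto_zero]
    simp only [norm_airyIntegrand_add_mul_I]
    simpa using (tendsto_exp_atBot.comp
      (hsq.const_mul_atTop_of_neg (neg_neg_of_pos hv))).const_mul (rexp (v ^ 3 / 3 - x * v))
  have : (cocompact ℝ).IsCountablyGenerated := cocompact_eq_atBot_atTop (α := ℝ) ▸ inferInstance
  have := intervalIntegral.tendsto_integral_filter_of_dominated_convergence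
    (μ := volume) (a := 0) (b := y) (f := fun _ => (0 : ℂ)) (l := cocompact ℝ)
    (F := fun R v : ℝ => airyIntegrand x (R + v * Complex.I)) (fun v => rexp (v ^ 3 / 3 - x * v))
    (.of_forall fun R => by unfold airyIntegrand; fun_prop)
    (.of_forall fun R => .of_forall fun v hv => hbound R (Set.uIoc_of_le hy ▸ hv).1)
    (Continuous.intervalIntegrable (by fun_prop) _ _)
    (.of_forall fun v hv => hlim (Set.uIoc_of_le hy ▸ hv).1)
  simpa using this

lemma Ai_eq_integral_add_mul_I (x : ℝ) {y : ℝ} (hy : 0 < y) :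
    Ai x = ((2 * π : ℝ) : ℂ)⁻¹ * ∫ s : ℝ, airyIntegrand x (s + y * Complex.I) := by
  have hdiff : Differentiable ℂ (airyIntegrand x) := by unfold airyIntegrand; fun_prop
  exact congrArg _ (tendsto_intervalIntegral_of_tendsto_vertical hdiff.differentiableOn
    (tendsto_integral_airyIntegrand_vertical x hy.le)
    (integrable_airyIntegrand_add_mul_I x hy)).limUnder_eq

lemma Ai_sq_eq_cubicGaussian {η : ℝ} (hη : 0 < η) :
    Ai (η ^ 2) =
      ((2 * π : ℝ) : ℂ)⁻¹ * ((rexp (2 * η ^ 3 / 3) : ℂ)⁻¹ * cubicGaussian (1 / 3) η) := by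
  have hexp : η ^ 3 / 3 - η ^ 2 * η = -(2 * η ^ 3 / 3) := by ring
  have hphase (s : ℝ) : s ^ 3 / 3 + (η ^ 2 - η ^ 2) * s = 1 / 3 * s ^ 3 := by ring
  rw [Ai_eq_integral_add_mul_I _ hη]
  simp only [airyIntegrand_add_mul_I, hexp, hphase]
  rw [integral_const_mul, integral_cexp_neg_mul_sq_mul_cexp_cube _ (by simpa using hη),
    Real.exp_neg, Complex.ofReal_inv]

/-- The branch of the logarithm on `Ω` with imaginary part in `(-π/2, 3π/2)`. -/
noncomputable def slitLog (z : ℂ) : ℂ :=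
  Complex.log (-Complex.I * z) + (π / 2 : ℝ) * Complex.I

lemma neg_I_mul_mem_slitPlane {z : ℂ} (hz : z ∈ Ω) : -Complex.I * z ∈ Complex.slitPlane := by
  by_contra h
  obtain ⟨him, hre⟩ : z.im ≤ 0 ∧ z.re = 0 := by simpa [Complex.mem_slitPlane_iff] using h
  exact hz ⟨z.im, him, by apply Complex.ext <;> simp [hre]⟩

lemma differentiableAt_slitLog {z : ℂ} (hz : z ∈ Ω) : DifferentiableAt ℂ slitLog z :=
  ((differentiableAt_id.const_mul _).clog (neg_I_mul_mem_slitPlane hz)).add_const _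

lemma slitLog_im_mem {z : ℂ} (hz : z ∈ Ω) :
    (slitLog z).im ∈ Set.Ioo (-(π / 2)) (3 * π / 2) := by
  have hlt := (Complex.arg_le_pi (-Complex.I * z)).lt_of_ne
    (Complex.mem_slitPlane_iff_arg.1 (neg_I_mul_mem_slitPlane hz)).1
  have hgt := Complex.neg_pi_lt_arg (-Complex.I * z)
  rw [slitLog, Complex.add_im, Complex.log_im, Complex.im_ofReal_mul, Complex.I_im]
  constructor <;> linarith

lemma slitLog_exp {w : ℂ} (hw : w.im ∈ Set.Ioc (-(π / 2)) (3 * π / 2)) :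
    slitLog (Complex.exp w) = w := by
  have hrot : -Complex.I * Complex.exp w = Complex.exp (w - (π / 2 : ℝ) * Complex.I) := by
    rw [sub_eq_neg_add, Complex.exp_add, ← neg_mul, Complex.ofReal_div, Complex.ofReal_ofNat,
      ← neg_div, Complex.exp_neg_pi_div_two_mul_I]
  have him : (w - (π / 2 : ℝ) * Complex.I).im = w.im - π / 2 := by simp
  rw [slitLog, hrot, Complex.log_exp, sub_add_cancel] <;> rw [him] <;> linarith [hw.1, hw.2]

lemma slitLog_mul_exp {r θ : ℝ} (hr : 0 < r) (hθ : θ ∈ Set.Ioc (-(π / 2)) (3 * π / 2)) :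
    slitLog (r * Complex.exp (Complex.I * θ)) = log r + Complex.I * θ := by
  have hpolar : (r : ℂ) * Complex.exp (Complex.I * θ) = Complex.exp (log r + Complex.I * θ) := by
    rw [Complex.exp_add, ← Complex.ofReal_exp, exp_log hr]
  rw [hpolar, slitLog_exp (by simpa using hθ)]

lemma re_exp_neg_slitLog_div_three_pos {z : ℂ} (hz : z ∈ Ω) :
    0 < (Complex.exp (-slitLog z / 3)).re := by
  obtain ⟨hgt, hlt⟩ := slitLog_im_mem hz
  have him : (-slitLog z / 3).im = -(slitLog z).im / 3 := by simp
  rw [Complex.exp_re, him]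
  exact mul_pos (exp_pos _) (cos_pos_of_mem_Ioo ⟨by linarith, by linarith⟩)

/-- The function `J`, written so that it visibly depends holomorphically on `z`: substituting
`t = r ^ (-1/6) u` in its defining integral moves the whole dependence on `z = r e^{iθ}` into the
logarithm of `z`. -/
noncomputable def airyJ (z : ℂ) : ℂ :=
  Complex.exp (-slitLog z / 6) * cubicGaussian √(2 / 27) (Complex.exp (-slitLog z / 3))

lemma differentiableOn_airyJ : DifferentiableOn ℂ airyJ Ω := fun z hz => by
  have hlog := differentiableAt_slitLog hz
  have hgauss := differentiableAt_cubicGaussian √(2 / 27) (re_exp_neg_slitLog_div_three_pos hz)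
  exact ((hlog.neg.div_const 6).cexp.mul
    (hgauss.comp z (hlog.neg.div_const 3).cexp)).differentiableWithinAt

lemma airyJ_mul_exp {r θ : ℝ} (hr : 0 < r) (hθ : θ ∈ Set.Ioo (-(π / 2)) (3 * π / 2)) :
    airyJ (r * Complex.exp (Complex.I * θ)) = Complex.exp (-(Complex.I * θ) / 6) *
      cubicGaussian √(2 * r / 27) (Complex.exp (-(Complex.I * θ) / 3)) := by
  set a : ℝ := rexp (-log r / 6) with ha
  have ha_pos : 0 < a := exp_pos _
  have ha_sqrt : a ^ 3 * √(2 * r / 27) = √(2 / 27) := by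
    have ha6 : (a ^ 3) ^ 2 = r⁻¹ := by
      rw [ha, ← pow_mul, ← exp_nat_mul, ← exp_log (inv_pos.2 hr), log_inv]
      congr 1; push_cast; ring
    rw [← sqrt_sq (pow_pos ha_pos 3).le, ← sqrt_mul (sq_nonneg _), ha6]
    congr 1; field_simp
  have hexp6 : Complex.exp (-(log r + Complex.I * θ) / 6) =
      a * Complex.exp (-(Complex.I * θ) / 6) := by
    rw [ha, Complex.ofReal_exp, ← Complex.exp_add]
    congr 1; push_cast; ring
  have hexp3 : Complex.exp (-(log r + Complex.I * θ) / 3) =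
      a ^ 2 * Complex.exp (-(Complex.I * θ) / 3) := by
    rw [ha, Complex.ofReal_exp, ← Complex.exp_nat_mul, ← Complex.exp_add]
    congr 1; push_cast; ring
  rw [airyJ, slitLog_mul_exp hr (Set.Ioo_subset_Ioc_self hθ), hexp6, hexp3, ← ha_sqrt,
    cubicGaussian_scale ha_pos, mul_comm (a : ℂ), mul_assoc,
    mul_inv_cancel_left₀ (Complex.ofReal_ne_zero.2 ha_pos.ne')]

lemma airyJ_ofReal {r : ℝ} (hr : 0 < r) : airyJ r = cubicGaussian √(2 * r / 27) 1 := by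
  simpa using airyJ_mul_exp (θ := 0) hr ⟨by linarith [pi_pos], by positivity⟩

lemma airyJ_eq_Ai {η : ℝ} (hη : 0 < η) :
    airyJ ((3 / (2 * η ^ 3) : ℝ)) =
      ((2 * π * √η * rexp (2 * η ^ 3 / 3) : ℝ) : ℂ) * Ai (η ^ 2) := by
  have hs : 0 < √η := sqrt_pos.2 hη
  have hcoef : √η ^ 3 * √(2 * (3 / (2 * η ^ 3)) / 27) = 1 / 3 := by
    have harg : (√η ^ 3) ^ 2 * (2 * (3 / (2 * η ^ 3)) / 27) = (1 / 3) ^ 2 := by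
      rw [pow_right_comm, sq_sqrt hη.le]
      field_simp
      norm_num
    rw [← sqrt_sq (pow_pos hs 3).le, ← sqrt_mul (sq_nonneg _), harg, sqrt_sq (by norm_num)]
  have hscale : cubicGaussian (1 / 3) η =
      (√η : ℂ)⁻¹ * cubicGaussian √(2 * (3 / (2 * η ^ 3)) / 27) 1 := by
    rw [← cubicGaussian_scale hs, hcoef, mul_one, ← Complex.ofReal_pow, sq_sqrt hη.le]
  have hs_ne : (√η : ℂ) ≠ 0 := Complex.ofReal_ne_zero.2 hs.ne'
  have hexp_ne : (rexp (2 * η ^ 3 / 3) : ℂ) ≠ 0 := Complex.ofReal_ne_zero.2 (exp_pos _).ne'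
  have hpi_ne : (π : ℂ) ≠ 0 := Complex.ofReal_ne_zero.2 pi_ne_zero
  rw [airyJ_ofReal (by positivity), Ai_sq_eq_cubicGaussian hη, hscale]
  simp only [Complex.ofReal_mul, Complex.ofReal_ofNat]
  field_simp

/-- There is a well-defined holomorphic function `J` on the slit plane
`Ω = ℂ \ { i y : y ≤ 0 }` satisfying
`J(r e^{iθ}) = e^{-iθ/6} ∫_{-∞}^{∞} exp(-e^{-iθ/3} t²) cos(√(2 t⁶ r / 27)) dt`
for all `r > 0`, `θ ∈ (-π/2, 3π/2)`, and such that
`J(3/(2η³)) = 2π √η e^{2η³/3} Ai(η²)` for every real `η > 0`. -/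
theorem exists_J_holomorphic :
    ∃ J : ℂ → ℂ, DifferentiableOn ℂ J Ω ∧
      (∀ r θ : ℝ, 0 < r → θ ∈ Set.Ioo (-(Real.pi/2)) (3*Real.pi/2) →
        J ((r : ℂ) * Complex.exp (Complex.I * θ)) =
          Complex.exp (-(Complex.I * θ) / 6) *
            ∫ t : ℝ, Complex.exp (-(Complex.exp (-(Complex.I * θ) / 3)) * (t : ℂ)^2) *
              ((Real.cos (Real.sqrt (2 * t^6 * r / 27)) : ℝ) : ℂ)) ∧
      (∀ η : ℝ, 0 < η →
        J ((3 / (2 * η^3) : ℝ)) =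
          ((2 * Real.pi * Real.sqrt η * Real.exp (2 * η^3 / 3) : ℝ) : ℂ) * Ai (η^2)) := by
  refine ⟨airyJ, differentiableOn_airyJ, fun r θ hr hθ => ?_, fun η hη => airyJ_eq_Ai hη⟩
  have hcos : ∀ t : ℝ, √(2 * t ^ 6 * r / 27) = √(2 * r / 27 * t ^ 6) := fun t => by
    congr 1; ring
  simp only [airyJ_mul_exp hr hθ, cubicGaussian, hcos, cos_sqrt_mul_pow_six]
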